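/- (Distributional solution from convolution with the kernel.) Let K : ℝ³ → ℝ be defined by K(x) = (1 - exp(-‖x‖))/‖x‖ for x ≠ 0 and K(0) = 1. Let f : ℝ³ → [0,∞) be measurable and suppose ψ_f := K*f, defined by ψ_f(x) = ∫_{ℝ³} K(x - y) f(y) dy, is locally integrable on ℝ³. Then f is locally integrable and, for every smooth compactly supported test function φ : ℝ³ → ℝ, ∫_{ℝ³} ψ_f(x) ( -Δφ(x) + Δ²φ(x) ) dx = 4π ∫_{ℝ³} f(x) φ(x) dx; that is, ψ_f solves -Δψ + Δ²ψ = 4π f in the sense of distributions. -/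

import Mathlib

open MeasureTheory Real
open scoped ENNReal Classical

noncomputable section

abbrev E3 := EuclideanSpace ℝ (Fin 3)

/-- Bopp–Podolsky kernel with `a = 1`. -/
def K1 (x : E3) : ℝ := if x = 0 then 1 else (1 - Real.exp (-‖x‖)) / ‖x‖

/-- Laplacian of `f` at `x`: sum of second derivatives along the coordinate directions. -/
def lap (f : E3 → ℝ) (x : E3) : ℝ :=
  ∑ i : Fin 3, fderiv ℝ (fun y => fderiv ℝ f y (EuclideanSpace.single i 1)) x
    (EuclideanSpace.single i 1)

/-- Bopp–Podolsky energy as an iterated lower integral, valued in `[0,∞]`. -/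
def Vlin (f g : E3 → ℝ) : ℝ≥0∞ :=
  ∫⁻ x, ∫⁻ y, ENNReal.ofReal (K1 (x - y) * f x * g y)

/-- Bopp–Podolsky energy as an iterated Bochner integral. -/
def Vr (f g : E3 → ℝ) : ℝ := ∫ x, ∫ y, K1 (x - y) * f x * g y

/-- `G` is the weak gradient of `u`. -/
def IsWeakGradient (u : E3 → ℝ) (G : E3 → E3) : Prop :=
  ∀ φ : E3 → ℝ, ContDiff ℝ (⊤ : ℕ∞) φ → HasCompactSupport φ → ∀ i : Fin 3,
    ∫ x, u x * fderiv ℝ φ x (EuclideanSpace.single i 1) = -∫ x, G x i * φ x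

/-- `h` is the weak Laplacian of `u`. -/
def IsWeakLaplacian (u : E3 → ℝ) (h : E3 → ℝ) : Prop :=
  ∀ φ : E3 → ℝ, ContDiff ℝ (⊤ : ℕ∞) φ → HasCompactSupport φ →
    ∫ x, u x * lap φ x = ∫ x, h x * φ x


def rho (ε : ℝ) (x : E3) : ℝ := Real.sqrt (‖x‖ ^ 2 + ε ^ 2)

lemma rho_pos {ε : ℝ} (hε : 0 < ε) (x : E3) : 0 < rho ε x := by
  unfold rho; positivity

lemma rho_sq (ε : ℝ) (x : E3) : rho ε x ^ 2 = ‖x‖ ^ 2 + ε ^ 2 := by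
  unfold rho; rw [Real.sq_sqrt]; positivity

lemma rho_comp_hasFDerivAt {ε : ℝ} (hε : 0 < ε) (H : ℝ → ℝ) (c : ℝ) (x : E3)
    (h : HasDerivAt H (c * rho ε x) (rho ε x)) :
    HasFDerivAt (fun y => H (rho ε y)) (c • innerSL ℝ x) x := by
  have h1 : HasFDerivAt (fun y : E3 => ‖y‖ ^ 2 + ε ^ 2) (2 • innerSL ℝ x) x :=
    ((hasStrictFDerivAt_norm_sq x).hasFDerivAt).add_const _
  have h2 := h1.sqrt (by positivity)
  have h3 := HasDerivAt.comp_hasFDerivAt x (f := rho ε) h h2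
  convert! h3 using 1
  have := rho_pos hε x
  ext v
  change _ = ((c * rho ε x) • ((1 / (2 * rho ε x)) • (2 • innerSL ℝ x))) v
  simp
  field_simp

def G0 (m t : ℝ) : ℝ := Real.exp (-(m * t)) * (1 / t)
def G1 (m t : ℝ) : ℝ := -(Real.exp (-(m * t)) * (m / t ^ 2 + 1 / t ^ 3))
def G2 (m t : ℝ) : ℝ := Real.exp (-(m * t)) * (m ^ 2 / t ^ 3 + 3 * m / t ^ 4 + 3 / t ^ 5)

lemma hasDerivAt_em (m t : ℝ) :
    HasDerivAt (fun t => Real.exp (-(m * t))) (Real.exp (-(m * t)) * (-m)) t := by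
  have := (((hasDerivAt_id t).const_mul m).neg).exp
  simpa using this

lemma G0_deriv (m t : ℝ) (ht : 0 < t) : HasDerivAt (G0 m) (G1 m t * t) t := by
  have h := (hasDerivAt_em m t).mul ((hasDerivAt_const t (1:ℝ)).div (hasDerivAt_id t) ht.ne')
  convert! h using 1
  simp only [G1, id, Pi.div_apply]
  field_simp
  ring

lemma G1_deriv (m t : ℝ) (ht : 0 < t) : HasDerivAt (G1 m) (G2 m t * t) t := by
  have h := ((hasDerivAt_em m t).mul (((hasDerivAt_const t m).div (hasDerivAt_pow 2 t)
    (by positivity)).add ((hasDerivAt_const t (1:ℝ)).div (hasDerivAt_pow 3 t) (by positivity)))).neg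
  convert! h using 1
  simp only [G2, Pi.div_apply, Pi.add_apply]
  field_simp
  norm_num
  field_simp
  ring

lemma fderiv_G0 {ε : ℝ} (hε : 0 < ε) (m : ℝ) (x : E3) :
    HasFDerivAt (fun y => G0 m (rho ε y)) (G1 m (rho ε x) • innerSL ℝ x) x :=
  rho_comp_hasFDerivAt hε _ _ x (G0_deriv m _ (rho_pos hε x))

lemma fderiv_G1 {ε : ℝ} (hε : 0 < ε) (m : ℝ) (x : E3) :
    HasFDerivAt (fun y => G1 m (rho ε y)) (G2 m (rho ε x) • innerSL ℝ x) x :=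
  rho_comp_hasFDerivAt hε _ _ x (G1_deriv m _ (rho_pos hε x))

lemma fderiv_G0_apply {ε : ℝ} (hε : 0 < ε) (m : ℝ) (x : E3) (i : Fin 3) :
    fderiv ℝ (fun y => G0 m (rho ε y)) x (EuclideanSpace.single i 1) = G1 m (rho ε x) * x i := by
  rw [(fderiv_G0 hε m x).fderiv]
  simp [EuclideanSpace.inner_single_right]

lemma fderiv_G1x {ε : ℝ} (hε : 0 < ε) (m : ℝ) (x : E3) (i : Fin 3) :
    HasFDerivAt (fun y : E3 => G1 m (rho ε y) * y i)
      (G1 m (rho ε x) • (EuclideanSpace.proj i : E3 →L[ℝ] ℝ) + x i • G2 m (rho ε x) • innerSL ℝ x) x := 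
  (fderiv_G1 hε m x).mul (EuclideanSpace.proj i : E3 →L[ℝ] ℝ).hasFDerivAt

lemma fderiv_G1x_apply {ε : ℝ} (hε : 0 < ε) (m : ℝ) (x : E3) (i : Fin 3) :
    fderiv ℝ (fun y : E3 => G1 m (rho ε y) * y i) x (EuclideanSpace.single i 1)
      = G1 m (rho ε x) + x i ^ 2 * G2 m (rho ε x) := by
  rw [(fderiv_G1x hε m x i).fderiv]
  simp [EuclideanSpace.inner_single_right]
  ring

lemma sum_G {ε : ℝ} (hε : 0 < ε) (m : ℝ) (x : E3) :
    ∑ i, (G1 m (rho ε x) + x i ^ 2 * G2 m (rho ε x)) =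
      m ^ 2 * G0 m (rho ε x) - ε ^ 2 * G2 m (rho ε x) := by
  rw [Finset.sum_add_distrib, ← Finset.sum_mul]
  have h : ∑ i, x i ^ 2 = rho ε x ^ 2 - ε ^ 2 := by
    rw [rho_sq, EuclideanSpace.norm_sq_eq]; simp
  rw [h]
  have := rho_pos hε x
  simp [G0, G1, G2]
  field_simp
  ring

lemma rho_cont (ε : ℝ) : Continuous (rho ε) := by unfold rho; fun_prop

lemma G0_cont {ε : ℝ} (hε : 0 < ε) (m : ℝ) : Continuous (fun x => G0 m (rho ε x)) := 
  continuous_iff_continuousAt.2 fun x => (fderiv_G0 hε m x).continuousAt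
lemma G1_cont {ε : ℝ} (hε : 0 < ε) (m : ℝ) : Continuous (fun x => G1 m (rho ε x)) := 
  continuous_iff_continuousAt.2 fun x => (fderiv_G1 hε m x).continuousAt
lemma G2_cont {ε : ℝ} (hε : 0 < ε) (m : ℝ) : Continuous (fun x => G2 m (rho ε x)) := by
  have := fun x => (rho_pos hε x).ne'
  have := rho_cont ε
  unfold G2
  fun_prop (disch := simp [*])

lemma pd_smooth {φ : E3 → ℝ} (h : ContDiff ℝ (⊤ : ℕ∞) φ) (v : E3) :
    ContDiff ℝ (⊤ : ℕ∞) (fun x => fderiv ℝ φ x v) :=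
  (h.fderiv_right (m := (⊤ : ℕ∞)) (by simp)).clm_apply contDiff_const

lemma pd_supp {φ : E3 → ℝ} (h : HasCompactSupport φ) (v : E3) :
    HasCompactSupport (fun x => fderiv ℝ φ x v) := h.fderiv_apply ℝ v

lemma lap_smooth {φ : E3 → ℝ} (h : ContDiff ℝ (⊤ : ℕ∞) φ) : ContDiff ℝ (⊤ : ℕ∞) (lap φ) := by
  unfold lap
  exact ContDiff.sum fun i _ => pd_smooth (pd_smooth h _) _

lemma lap_supp {φ : E3 → ℝ} (h : HasCompactSupport φ) : HasCompactSupport (lap φ) := by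
  have : lap φ = fun x => ∑ i : Fin 3, fderiv ℝ (fun y => fderiv ℝ φ y (EuclideanSpace.single i 1)) x
    (EuclideanSpace.single i 1) := rfl
  rw [this]
  simp only [Fin.sum_univ_three]
  exact ((pd_supp (pd_supp h _) _).add (pd_supp (pd_supp h _) _)).add (pd_supp (pd_supp h _) _)

lemma int_cs {u φ : E3 → ℝ} (hu : Continuous u) (hφ : Continuous φ) (h : HasCompactSupport φ) :
    Integrable (fun x => u x * φ x) :=
  (hu.mul hφ).integrable_of_hasCompactSupport h.mul_left

lemma green {ε : ℝ} (hε : 0 < ε) (m : ℝ) {φ : E3 → ℝ} (h : ContDiff ℝ (⊤ : ℕ∞) φ)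
    (hc : HasCompactSupport φ) :
    ∫ x, G0 m (rho ε x) * (m ^ 2 * φ x - lap φ x) = ∫ x, ε ^ 2 * G2 m (rho ε x) * φ x := by
  have key : ∀ i : Fin 3, ∫ x, G0 m (rho ε x) * fderiv ℝ (fun y => fderiv ℝ φ y (EuclideanSpace.single i 1)) x
    (EuclideanSpace.single i 1) = ∫ x, (G1 m (rho ε x) + x i ^ 2 * G2 m (rho ε x)) * φ x := by
    intro i
    have e1 := pd_smooth h (EuclideanSpace.single i 1)
    have e2 := pd_smooth e1 (EuclideanSpace.single i 1)
    have c1 := pd_supp hc (EuclideanSpace.single i 1)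
    have c2 := pd_supp c1 (EuclideanSpace.single i 1)
    have k0 := G0_cont hε m
    have k1 := G1_cont hε m
    have k2 := G2_cont hε m
    have kx : Continuous fun x : E3 => x i := by fun_prop
    rw [integral_mul_fderiv_eq_neg_fderiv_mul_of_integrable]
    rotate_left
    · simp_rw [fderiv_G0_apply hε]
      exact int_cs (k1.mul kx) e1.continuous c1
    · exact int_cs k0 e2.continuous c2
    · exact int_cs k0 e1.continuous c1
    · exact fun x _ => (fderiv_G0 hε m x).differentiableAt
    · exact fun x _ => e1.differentiable (by simp) x
    simp_rw [fderiv_G0_apply hε]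
    rw [integral_mul_fderiv_eq_neg_fderiv_mul_of_integrable]
    rotate_left
    · simp_rw [fderiv_G1x_apply hε]
      exact int_cs (k1.add ((kx.pow 2).mul k2)) h.continuous hc
    · exact int_cs (k1.mul kx) e1.continuous c1
    · exact int_cs (k1.mul kx) h.continuous hc
    · exact fun x _ => (fderiv_G1x hε m x i).differentiableAt
    · exact fun x _ => h.differentiable (by simp) x
    simp_rw [fderiv_G1x_apply hε]
    simp
  have k0 := G0_cont hε m
  have k1 := G1_cont hε m
  have k2 := G2_cont hε m
  have hl : ∫ x, G0 m (rho ε x) * lap φ x = ∫ x, (m ^ 2 * G0 m (rho ε x) - ε ^ 2 * G2 m (rho ε x)) * φ x := by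
    simp_rw [← sum_G hε, lap, Finset.mul_sum, Finset.sum_mul]
    rw [integral_finsetSum, integral_finsetSum]
    · exact Finset.sum_congr rfl fun i _ => key i
    · intro i _
      exact int_cs (by fun_prop) h.continuous hc
    · intro i _
      exact int_cs k0 (pd_smooth (pd_smooth h _) _).continuous (pd_supp (pd_supp hc _) _)
  simp_rw [mul_sub]
  rw [integral_sub, hl, ← integral_sub]
  · congr 1; ext x; ring
  · exact int_cs k0 (continuous_const.mul h.continuous) hc.mul_left
  · exact int_cs (by fun_prop) h.continuous hc
  · exact int_cs k0 (continuous_const.mul h.continuous) hc.mul_left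
  · exact int_cs k0 (lap_smooth h).continuous (lap_supp hc)

lemma radial_integral : ∫ z : E3, 3 / rho 1 z ^ 5 = 4 * Real.pi := by
  have h := integral_fun_norm_addHaar (volume : Measure E3)
    (fun r : ℝ => 3 / Real.sqrt (r ^ 2 + 1 ^ 2) ^ 5)
  have h2 : ∫ y in Set.Ioi (0:ℝ), y ^ 2 • (3 / Real.sqrt (y ^ 2 + 1 ^ 2) ^ 5) = 1 - 0 := by
    have e : (0:ℝ) = (fun r : ℝ => (r / Real.sqrt (r ^ 2 + 1 ^ 2)) ^ 3) 0 := by simp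
    conv_rhs => rw [e]
    apply integral_Ioi_of_hasDerivAt_of_nonneg' (g := fun r : ℝ => (r / Real.sqrt (r ^ 2 + 1 ^ 2)) ^ 3)
      (g' := fun y : ℝ => y ^ 2 • (3 / Real.sqrt (y ^ 2 + 1 ^ 2) ^ 5))
    · intro x _
      have hp : 0 < x ^ 2 + (1:ℝ) ^ 2 := by positivity
      have hs : 0 < Real.sqrt (x ^ 2 + (1:ℝ) ^ 2) := by positivity
      have hsq : Real.sqrt (x ^ 2 + (1:ℝ) ^ 2) ^ 2 = x ^ 2 + 1 ^ 2 := Real.sq_sqrt hp.le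
      have := (((hasDerivAt_id x).div (((hasDerivAt_pow 2 x).add_const ((1:ℝ)^2)).sqrt hp.ne')
        hs.ne').pow 3)
      convert! this using 1
      simp only [Pi.div_apply, id, smul_eq_mul]
      generalize Real.sqrt (x ^ 2 + (1:ℝ) ^ 2) = s at *
      have hx : x ^ 2 = s ^ 2 - 1 := by rw [hsq]; ring
      norm_num
      field_simp
      linear_combination (-(x^2))*hsq
    · intro x _
      positivity
    · have : Filter.Tendsto (fun r : ℝ => (1 / Real.sqrt (1 + (r⁻¹) ^ 2)) ^ 3) Filter.atTop
          (nhds ((1 / Real.sqrt (1 + 0 ^ 2)) ^ 3)) := by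
        have h0 := tendsto_inv_atTop_zero (𝕜 := ℝ)
        refine Filter.Tendsto.pow (Filter.Tendsto.div tendsto_const_nhds ?_ (by simp)) 3
        exact ((h0.pow 2).const_add 1).sqrt
      have e1 : (1 / Real.sqrt (1 + (0:ℝ) ^ 2)) ^ 3 = 1 := by simp
      rw [e1] at this
      refine this.congr' ?_
      filter_upwards [Filter.eventually_gt_atTop 0] with r hr
      have : Real.sqrt (r ^ 2 + 1 ^ 2) = r * Real.sqrt (1 + (r⁻¹) ^ 2) := by
        rw [show r ^ 2 + 1 ^ 2 = r ^ 2 * (1 + (r⁻¹) ^ 2) by field_simp,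
          Real.sqrt_mul (by positivity), Real.sqrt_sq hr.le]
      rw [this]
      field_simp
  have h3 : (volume : Measure E3).real (Metric.ball 0 1) = Real.pi * 4 / 3 := by
    rw [Measure.real, EuclideanSpace.volume_ball_fin_three]
    simp
    positivity
  have hd : Module.finrank ℝ E3 = 3 := by simp
  rw [hd, h3] at h
  unfold rho
  rw [h]
  simp only [show 3 - 1 = 2 from rfl, h2]
  simp
  ring

lemma int_rho4 : Integrable (fun z : E3 => 1 / rho 1 z ^ 4) := by
  have := integrable_rpow_neg_one_add_norm_sq (E := E3) (μ := volume) (r := 4) (by simp; norm_num)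
  refine this.congr ?_
  filter_upwards with x
  have h : rho 1 x ^ 4 = (1 + ‖x‖ ^ 2) ^ 2 := by
    rw [show rho 1 x ^ 4 = (rho 1 x ^ 2) ^ 2 by ring, rho_sq]; ring
  rw [h, show (-4 / 2 : ℝ) = -((2 : ℕ) : ℝ) by norm_num, Real.rpow_neg (by positivity),
    Real.rpow_natCast, one_div]

lemma one_le_rho (x : E3) : 1 ≤ rho 1 x := by
  unfold rho
  rw [Real.one_le_sqrt]
  nlinarith [sq_nonneg ‖x‖]

lemma rho_smul {ε : ℝ} (hε : 0 < ε) (z : E3) : rho ε (ε • z) = ε * rho 1 z := by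
  unfold rho
  rw [norm_smul, Real.norm_of_nonneg hε.le, show (ε * ‖z‖) ^ 2 + ε ^ 2 = ε ^ 2 * (‖z‖ ^ 2 + 1 ^ 2) by ring,
    Real.sqrt_mul (by positivity), Real.sqrt_sq hε.le]

lemma rhs_scale {ε : ℝ} (hε : 0 < ε) (m : ℝ) (φ : E3 → ℝ) :
    ∫ x, ε ^ 2 * G2 m (rho ε x) * φ x = ∫ z, Real.exp (-(m * (ε * rho 1 z))) *
      (m ^ 2 * ε ^ 2 / rho 1 z ^ 3 + 3 * m * ε / rho 1 z ^ 4 + 3 / rho 1 z ^ 5) * φ (ε • z) := by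
  have h := Measure.integral_comp_smul_of_nonneg (volume : Measure E3)
    (fun x => ε ^ 2 * G2 m (rho ε x) * φ x) ε (hR := hε.le)
  have hd : Module.finrank ℝ E3 = 3 := by simp
  rw [hd, smul_eq_mul, eq_inv_mul_iff_mul_eq₀ (by positivity), ← integral_const_mul] at h
  rw [← h]
  congr 1
  ext z
  rw [rho_smul hε]
  have := rho_pos one_pos z
  unfold G2
  field_simp

lemma rhs_tendsto {m : ℝ} (hm : 0 ≤ m) {φ : E3 → ℝ} (hφ : Continuous φ)
    (hc : HasCompactSupport φ) :
    Filter.Tendsto (fun ε : ℝ => ∫ x, ε ^ 2 * G2 m (rho ε x) * φ x) (nhdsWithin 0 (Set.Ioi 0))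
      (nhds (4 * Real.pi * φ 0)) := by
  obtain ⟨C, hC⟩ := hc.exists_bound_of_continuous hφ
  have hC0 : 0 ≤ C := (norm_nonneg _).trans (hC 0)
  have hlim : ∫ z : E3, 3 / rho 1 z ^ 5 * φ 0 = 4 * Real.pi * φ 0 := by
    rw [integral_mul_const, radial_integral]
  rw [← hlim]
  have heq : (fun ε : ℝ => ∫ z, Real.exp (-(m * (ε * rho 1 z))) *
      (m ^ 2 * ε ^ 2 / rho 1 z ^ 3 + 3 * m * ε / rho 1 z ^ 4 + 3 / rho 1 z ^ 5) * φ (ε • z))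
      =ᶠ[nhdsWithin 0 (Set.Ioi 0)] (fun ε : ℝ => ∫ x, ε ^ 2 * G2 m (rho ε x) * φ x) := by
    filter_upwards [self_mem_nhdsWithin] with ε hε
    exact (rhs_scale hε m φ).symm
  refine Filter.Tendsto.congr' heq ?_
  have hr0 : ∀ z, rho 1 z ≠ 0 := fun z => (rho_pos one_pos z).ne'
  have hrc := rho_cont 1
  apply tendsto_integral_filter_of_dominated_convergence
    (fun z => (4 * m + 3) * C * (1 / rho 1 z ^ 4))
  · filter_upwards with ε
    apply Continuous.aestronglyMeasurable
    fun_prop (disch := simp [*])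
  · filter_upwards [Ioo_mem_nhdsGT (zero_lt_one (α := ℝ))] with ε hε
    obtain ⟨h0, h1⟩ := hε
    filter_upwards with z
    have hs := one_le_rho z
    rw [norm_mul, mul_right_comm (4 * m + 3) C]
    refine mul_le_mul ?_ (hC _) (norm_nonneg _) (by positivity)
    generalize rho 1 z = s at *
    have hs0 : 0 < s := by linarith
    rw [Real.norm_of_nonneg (by positivity)]
    have hx : 0 ≤ m * (ε * s) := by positivity
    have e1 : Real.exp (-(m * (ε * s))) ≤ 1 := by simpa using hx
    have e2 : Real.exp (-(m * (ε * s))) * (m * (ε * s)) ≤ 1 := by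
      rw [Real.exp_neg, inv_mul_le_iff₀ (Real.exp_pos _)]
      linarith [Real.add_one_le_exp (m * (ε * s))]
    have e0 := (Real.exp_pos (-(m * (ε * s)))).le
    have a1 : Real.exp (-(m * (ε * s))) * (m ^ 2 * ε ^ 2 / s ^ 3) ≤ m * (1 / s ^ 4) := by
      have : Real.exp (-(m * (ε * s))) * (m ^ 2 * ε ^ 2 / s ^ 3) =
        (Real.exp (-(m * (ε * s))) * (m * (ε * s))) * (m * ε / s ^ 4) := by field_simp
      rw [this]
      calc _ ≤ 1 * (m * ε / s ^ 4) := by gcongr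
        _ ≤ 1 * (m * 1 / s ^ 4) := by gcongr
        _ = _ := by ring
    have a2 : Real.exp (-(m * (ε * s))) * (3 * m * ε / s ^ 4) ≤ 3 * m * (1 / s ^ 4) := by
      calc _ ≤ 1 * (3 * m * 1 / s ^ 4) := by gcongr
        _ = _ := by ring
    have a3 : Real.exp (-(m * (ε * s))) * (3 / s ^ 5) ≤ 3 * (1 / s ^ 4) := by
      calc _ ≤ 1 * (3 / s ^ 4) := by
            gcongr
            norm_num
        _ = _ := by ring
    rw [mul_add, mul_add]
    linarith
  · exact int_rho4.const_mul _
  · filter_upwards with z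
    have : ContinuousAt (fun ε : ℝ => Real.exp (-(m * (ε * rho 1 z))) *
      (m ^ 2 * ε ^ 2 / rho 1 z ^ 3 + 3 * m * ε / rho 1 z ^ 4 + 3 / rho 1 z ^ 5) * φ (ε • z)) 0 := by
      apply Continuous.continuousAt
      fun_prop
    have := this.tendsto
    simp at this
    simpa using this.mono_left nhdsWithin_le_nhds

lemma int_inv_norm {ψ : E3 → ℝ} (hψ : Continuous ψ) (hc : HasCompactSupport ψ) :
    Integrable (fun x => ‖x‖⁻¹ * ψ x) := by
  obtain ⟨C, hC⟩ := hc.exists_bound_of_continuous hψ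
  obtain ⟨R, hR⟩ := hc.isCompact.isBounded.subset_ball (0 : E3)
  have h1 : IntegrableOn (fun x : E3 => ‖x‖⁻¹) (Metric.ball 0 R) := by
    rw [integrableOn_fun_norm_addHaar volume (f := fun r : ℝ => r⁻¹)]
    have hd : Module.finrank ℝ E3 = 3 := by simp
    rw [hd]
    have : IntegrableOn (fun y : ℝ => y) (Set.Ioo 0 R) :=
      (continuous_id.integrableOn_Icc).mono_set Set.Ioo_subset_Icc_self
    refine this.congr_fun ?_ measurableSet_Ioo
    intro y hy
    have := hy.1
    simp
    field_simp
  have h2 : IntegrableOn (fun x => ‖x‖⁻¹ * ψ x) (Metric.ball 0 R) :=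
    Integrable.mul_bdd (c := C) h1 hψ.aestronglyMeasurable (by filter_upwards with x; exact hC x)
  rwa [integrableOn_iff_integrable_of_support_subset] at h2
  intro x hx
  apply hR
  apply subset_tsupport
  intro h
  simp [h] at hx

lemma G0_bound {m : ℝ} (hm : 0 ≤ m) {t r : ℝ} (hr : 0 < r) (h : r ≤ t) : ‖G0 m t‖ ≤ r⁻¹ := by
  have ht : 0 < t := by linarith
  unfold G0
  rw [Real.norm_of_nonneg (by positivity)]
  have : Real.exp (-(m * t)) ≤ 1 := by
    have : 0 ≤ m * t := by positivity
    simpa using this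
  calc _ ≤ 1 * (1 / r) := by gcongr
    _ = _ := by simp

lemma ae_ne_zero : ∀ᵐ x : E3, x ≠ 0 := by
  simp [ae_iff]

lemma norm_le_rho (ε : ℝ) (x : E3) : ‖x‖ ≤ rho ε x := by
  unfold rho
  apply Real.le_sqrt_of_sq_le
  nlinarith [sq_nonneg ε]

lemma int_G0 {m : ℝ} (hm : 0 ≤ m) {ψ : E3 → ℝ} (hψ : Continuous ψ) (hc : HasCompactSupport ψ) :
    Integrable (fun x => G0 m ‖x‖ * ψ x) := by
  refine (int_inv_norm hψ hc).mono ?_ ?_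
  · refine Measurable.aestronglyMeasurable ?_
    have := hψ.measurable
    unfold G0
    fun_prop
  · filter_upwards [ae_ne_zero] with x hx
    have : 0 < ‖x‖ := norm_pos_iff.2 hx
    rw [norm_mul, norm_mul]
    refine mul_le_mul_of_nonneg_right ((G0_bound hm this le_rfl).trans ?_) (norm_nonneg _)
    exact Real.le_norm_self _

lemma lhs_tendsto {m : ℝ} (hm : 0 ≤ m) {ψ : E3 → ℝ} (hψ : Continuous ψ)
    (hc : HasCompactSupport ψ) :
    Filter.Tendsto (fun ε : ℝ => ∫ x, G0 m (rho ε x) * ψ x) (nhdsWithin 0 (Set.Ioi 0))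
      (nhds (∫ x, G0 m ‖x‖ * ψ x)) := by
  apply tendsto_integral_filter_of_dominated_convergence (fun x => ‖‖x‖⁻¹ * ψ x‖)
  · filter_upwards [self_mem_nhdsWithin] with ε hε
    exact ((G0_cont hε m).mul hψ).aestronglyMeasurable
  · filter_upwards with ε
    filter_upwards [ae_ne_zero] with x hx
    have : 0 < ‖x‖ := norm_pos_iff.2 hx
    rw [norm_mul, norm_mul]
    refine mul_le_mul_of_nonneg_right ((G0_bound hm this (norm_le_rho ε x)).trans ?_) (norm_nonneg _)
    exact Real.le_norm_self _
  · exact (int_inv_norm hψ hc).norm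
  · filter_upwards [ae_ne_zero] with x hx
    have hp : 0 < ‖x‖ := norm_pos_iff.2 hx
    have h0 : rho 0 x = ‖x‖ := by unfold rho; simp
    have h1 : Filter.Tendsto (fun ε => rho ε x) (nhdsWithin 0 (Set.Ioi 0)) (nhds ‖x‖) := by
      rw [← h0]
      have : Continuous (fun ε => rho ε x) := by unfold rho; fun_prop
      exact (this.tendsto 0).mono_left nhdsWithin_le_nhds
    exact ((G0_deriv m _ hp).continuousAt.tendsto.comp h1).mul_const _

lemma cs_sub {a b : E3 → ℝ} (ha : HasCompactSupport a) (hb : HasCompactSupport b) :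
    HasCompactSupport (fun x => a x - b x) := ha.sub hb

lemma cs_mul (c : ℝ) {a : E3 → ℝ} (ha : HasCompactSupport a) :
    HasCompactSupport (fun x => c * a x) := ha.mul_left (f := fun _ => c)

lemma fund {m : ℝ} (hm : 0 ≤ m) {φ : E3 → ℝ} (h : ContDiff ℝ (⊤ : ℕ∞) φ)
    (hc : HasCompactSupport φ) :
    ∫ x, G0 m ‖x‖ * (m ^ 2 * φ x - lap φ x) = 4 * Real.pi * φ 0 := by
  have h1 := lhs_tendsto hm (ψ := fun x => m ^ 2 * φ x - lap φ x)
    ((continuous_const.mul h.continuous).sub (lap_smooth h).continuous)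
    (cs_sub (cs_mul _ hc) (lap_supp hc))
  refine tendsto_nhds_unique h1 ((rhs_tendsto hm h.continuous hc).congr' ?_)
  filter_upwards [self_mem_nhdsWithin] with ε hε
  exact (green hε m h hc).symm

lemma lap_sub {a b : E3 → ℝ} (ha : ContDiff ℝ (⊤ : ℕ∞) a) (hb : ContDiff ℝ (⊤ : ℕ∞) b) (x : E3) :
    lap (fun x => a x - b x) x = lap a x - lap b x := by
  unfold lap
  rw [← Finset.sum_sub_distrib]
  refine Finset.sum_congr rfl fun i _ => ?_
  have e : (fun y => fderiv ℝ (fun x => a x - b x) y (EuclideanSpace.single i 1)) =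
    fun y => fderiv ℝ a y (EuclideanSpace.single i 1) - fderiv ℝ b y (EuclideanSpace.single i 1) := by
    ext y
    rw [fderiv_fun_sub (ha.differentiable (by simp) y) (hb.differentiable (by simp) y)]
    simp
  rw [e, fderiv_fun_sub ((pd_smooth ha _).differentiable (by simp) x)
    ((pd_smooth hb _).differentiable (by simp) x)]
  simp

lemma K1_fund {φ : E3 → ℝ} (h : ContDiff ℝ (⊤ : ℕ∞) φ) (hc : HasCompactSupport φ) :
    ∫ x, K1 x * (-(lap φ x) + lap (lap φ) x) = 4 * Real.pi * φ 0 := by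
  have hl := lap_smooth h
  have hlc := lap_supp hc
  have a := fund le_rfl (φ := fun x => φ x - lap φ x) (h.sub hl) (cs_sub hc hlc)
  have b := fund zero_le_one hl hlc
  simp only [lap_sub h hl] at a
  have hLc := (lap_smooth hl).continuous
  have i0 := int_G0 le_rfl (m := 0) (ψ := fun x => 0 ^ 2 * (φ x - lap φ x) - (lap φ x - lap (lap φ) x))
    ((continuous_const.mul (h.continuous.sub hl.continuous)).sub (hl.continuous.sub hLc))
    (cs_sub (cs_mul _ (cs_sub hc hlc)) (cs_sub hlc (lap_supp hlc)))
  have i1 := int_G0 zero_le_one (m := 1) (ψ := fun x => 1 ^ 2 * lap φ x - lap (lap φ) x)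
    ((continuous_const.mul hl.continuous).sub hLc)
    (cs_sub (cs_mul _ hlc) (lap_supp hlc))
  have : 4 * Real.pi * φ 0 = 4 * Real.pi * (φ 0 - lap φ 0) + 4 * Real.pi * lap φ 0 := by ring
  rw [this, ← a, ← b, ← integral_add i0 i1]
  apply integral_congr_ae
  filter_upwards [ae_ne_zero] with x hx
  simp only [K1, hx, if_false, G0]
  simp
  ring

lemma lap_shift (φ : E3 → ℝ) (y : E3) : lap (fun x => φ (x + y)) = fun x => lap φ (x + y) := by
  ext x
  unfold lap
  refine Finset.sum_congr rfl fun i _ => ?_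
  simp_rw [fderiv_comp_add_right]
  rw [fderiv_comp_add_right (f := fun z => fderiv ℝ φ z (EuclideanSpace.single i 1))]

lemma K1_shift {φ : E3 → ℝ} (h : ContDiff ℝ (⊤ : ℕ∞) φ) (hc : HasCompactSupport φ) (y : E3) :
    ∫ x, K1 (x - y) * (-(lap φ x) + lap (lap φ) x) = 4 * Real.pi * φ y := by
  have h1 : ContDiff ℝ (⊤ : ℕ∞) (fun x => φ (x + y)) := h.comp (contDiff_id.add contDiff_const)
  have h2 : HasCompactSupport (fun x => φ (x + y)) :=
    hc.comp_homeomorph (Homeomorph.addRight y)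
  have h3 := K1_fund h1 h2
  rw [lap_shift, lap_shift] at h3
  rw [← integral_add_right_eq_self _ y]
  simpa using h3

lemma K1_meas : Measurable K1 := by
  unfold K1
  refine Measurable.ite (measurableSet_singleton 0) measurable_const ?_
  fun_prop

lemma K1_lower (x : E3) : 1 / (1 + ‖x‖) ≤ K1 x := by
  unfold K1
  split_ifs with h
  · simp [h]
  · have hp : 0 < ‖x‖ := norm_pos_iff.2 h
    generalize ‖x‖ = r at *
    have h1 := Real.add_one_le_exp r
    have h2 : Real.exp (-r) ≤ 1 / (1 + r) := by
      rw [Real.exp_neg, inv_eq_one_div]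
      gcongr
      linarith
    rw [le_div_iff₀ hp]
    have : 1 / (1 + r) * r = 1 - 1 / (1 + r) := by field_simp; ring
    linarith

lemma K1_nonneg (x : E3) : 0 ≤ K1 x := le_trans (by positivity) (K1_lower x)

lemma f_locInt (f : E3 → ℝ) (hf : Measurable f) (hf0 : ∀ x, 0 ≤ f x)
    (hloc : ∀ s : Set E3, IsCompact s →
      ∫⁻ x in s, ∫⁻ y, ENNReal.ofReal (K1 (x - y) * f y) < ⊤) :
    LocallyIntegrable f volume := by
  rw [locallyIntegrable_iff]
  intro k hk
  obtain ⟨R, hR0, hR⟩ := hk.isBounded.subset_closedBall_lt 0 (0 : E3)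
  refine IntegrableOn.mono_set ?_ hR
  set s := Metric.closedBall (0 : E3) R with hs
  have hfin := hloc s (isCompact_closedBall 0 R)
  have hle : ∫⁻ x in s, ENNReal.ofReal (1 / (1 + 2 * R)) * ∫⁻ y in s, ENNReal.ofReal (f y) ≤
      ∫⁻ x in s, ∫⁻ y, ENNReal.ofReal (K1 (x - y) * f y) := by
    refine setLIntegral_mono' measurableSet_closedBall fun x hx => ?_
    rw [← lintegral_const_mul _ (by fun_prop)]
    refine le_trans ?_ (setLIntegral_le_lintegral s _)
    refine setLIntegral_mono' measurableSet_closedBall fun y hy => ?_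
    rw [← ENNReal.ofReal_mul (by positivity)]
    apply ENNReal.ofReal_le_ofReal
    refine mul_le_mul_of_nonneg_right (le_trans ?_ (K1_lower _)) (hf0 y)
    rw [hs, mem_closedBall_zero_iff] at hx hy
    gcongr
    linarith [norm_sub_le x y]
  have h2 := hle.trans_lt hfin
  rw [setLIntegral_const] at h2
  refine ⟨hf.aestronglyMeasurable, ?_⟩
  rw [hasFiniteIntegral_iff_ofReal (by filter_upwards with x; exact hf0 x)]
  by_contra hcon
  rw [not_lt, top_le_iff] at hcon
  rw [hcon, ENNReal.mul_top (by simp; positivity), ENNReal.top_mul] at h2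
  · exact lt_irrefl _ h2
  · exact (Metric.measure_closedBall_pos volume 0 hR0).ne'

lemma prod_int (f : E3 → ℝ) (hf : Measurable f) (hf0 : ∀ x, 0 ≤ f x)
    (hloc : ∀ s : Set E3, IsCompact s →
      ∫⁻ x in s, ∫⁻ y, ENNReal.ofReal (K1 (x - y) * f y) < ⊤)
    {L : E3 → ℝ} (hL : Continuous L) (hc : HasCompactSupport L) :
    Integrable (fun p : E3 × E3 => (K1 (p.1 - p.2) * f p.2) * L p.1) (volume.prod volume) := by
  obtain ⟨C, hC⟩ := hc.exists_bound_of_continuous hL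
  have hLm := hL.measurable
  have hK := K1_meas
  have hm : Measurable (fun p : E3 × E3 => (K1 (p.1 - p.2) * f p.2) * L p.1) := by fun_prop
  refine ⟨hm.aestronglyMeasurable, ?_⟩
  unfold HasFiniteIntegral
  rw [lintegral_prod _ (by fun_prop)]
  have hfin := hloc _ hc.isCompact
  have hlt := ENNReal.mul_lt_top (ENNReal.ofReal_lt_top (r := C)) hfin
  refine lt_of_le_of_lt ?_ hlt
  rw [← lintegral_const_mul' _ _ ENNReal.ofReal_ne_top,
    ← lintegral_indicator hc.isCompact.measurableSet]
  refine lintegral_mono fun x => ?_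
  by_cases hx : x ∈ tsupport L
  · rw [Set.indicator_of_mem hx, ← lintegral_const_mul' _ _ ENNReal.ofReal_ne_top]
    refine lintegral_mono fun y => ?_
    simp only [enorm_mul]
    rw [mul_comm, ← enorm_mul, ← ofReal_norm, ← ofReal_norm,
      Real.norm_of_nonneg (mul_nonneg (K1_nonneg _) (hf0 _))]
    gcongr
    exact hC x
  · have : L x = 0 := image_eq_zero_of_notMem_tsupport hx
    simp [this]

/-- Distributional solution from convolution with the kernel: if `f ≥ 0` is measurable and
`ψ_f = K*f` is locally integrable, then `f` is locally integrable and `ψ_f` solves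
`-Δψ + Δ²ψ = 4π f` in the sense of distributions. -/
theorem conv_solves_distributional (f : E3 → ℝ) (hf : Measurable f) (hf0 : ∀ x, 0 ≤ f x)
    (hloc : ∀ s : Set E3, IsCompact s →
      ∫⁻ x in s, ∫⁻ y, ENNReal.ofReal (K1 (x - y) * f y) < ⊤) :
    LocallyIntegrable f volume ∧
    ∀ φ : E3 → ℝ, ContDiff ℝ (⊤ : ℕ∞) φ → HasCompactSupport φ →
      ∫ x, (∫ y, K1 (x - y) * f y) * (-(lap φ x) + lap (lap φ) x) =
        4 * Real.pi * ∫ x, f x * φ x := by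
  refine ⟨f_locInt f hf hf0 hloc, fun φ h hc => ?_⟩
  have hl := lap_smooth h
  have hlc := lap_supp hc
  have hLc : Continuous (fun x => lap (lap φ) x - lap φ x) :=
    (lap_smooth hl).continuous.sub hl.continuous
  have hI := prod_int f hf hf0 hloc hLc (cs_sub (lap_supp hlc) hlc)
  calc ∫ x, (∫ y, K1 (x - y) * f y) * (-(lap φ x) + lap (lap φ) x)
      = ∫ x, ∫ y, (K1 (x - y) * f y) * (lap (lap φ) x - lap φ x) := by
        congr 1
        ext x
        rw [integral_mul_const, neg_add_eq_sub]
    _ = ∫ y, ∫ x, (K1 (x - y) * f y) * (lap (lap φ) x - lap φ x) :=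
        integral_integral_swap hI
    _ = ∫ y, 4 * Real.pi * (f y * φ y) := by
        congr 1
        ext y
        have := K1_shift h hc y
        calc _ = ∫ x, f y * (K1 (x - y) * (-(lap φ x) + lap (lap φ) x)) := by
              congr 1
              ext x
              ring
          _ = _ := by
              rw [integral_const_mul, this]
              ring
    _ = 4 * Real.pi * ∫ x, f x * φ x := integral_const_mul _ _
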